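/- arXiv:math/0407335 — 3 statements merged into one kernel-verified Lean document; each statement's English description precedes it below -/
import Mathlib

section
/- Let k be an infinite field and let r ≥ 2. Then the set { tr(g)·tr(g⁻¹) : g ∈ SL_r(k) } is an infinite subset of k. (This expresses that the trace of the adjoint representation defines a dominant, in particular non-constant, morphism SL_r → 𝔸¹.) -/
/-!
For `i ≠ j` both the product of transvections `(1 + a E_ij) (1 + b E_ji)` and its inverse
`(1 - b E_ji) (1 - a E_ij)` have trace `r + a b`. So every scalar `c` is at once the trace of some
`g ∈ SL_r` and that of `g⁻¹`, and every square is a value of `tr g * tr g⁻¹`. Since squaring has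
finite fibres in a domain, an infinite domain has infinitely many squares.
-/

open Matrix.SpecialLinearGroup (transvection transvection_coe transvection_inv)

theorem infinite_range_pow (R : Type*) [CommRing R] [IsDomain R] [Infinite R] {m : ℕ}
    (hm : 0 < m) : (Set.range fun x : R => x ^ m).Infinite := by
  classical
  intro hfin
  refine Set.infinite_univ (α := R) (Set.Finite.of_finite_fibers (fun x => x ^ m) ?_ ?_)
  · rwa [Set.image_univ]
  · intro y _
    refine (Polynomial.nthRoots m y).toFinset.finite_toSet.subset fun x hx => ?_
    simpa [Polynomial.mem_nthRoots hm] using hx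

section SpecialLinearGroup

variable {n R : Type*} [Fintype n] [DecidableEq n] [CommRing R]

theorem trace_transvection_mul_transvection {i j : n} (hij : i ≠ j) (a b : R) :
    Matrix.trace (transvection hij a * transvection hij.symm b).val =
      Fintype.card n + a * b := by
  simp [transvection_coe, add_mul, mul_add, hij, hij.symm]

theorem trace_inv_transvection_mul_transvection {i j : n} (hij : i ≠ j) (a b : R) :
    Matrix.trace (transvection hij a * transvection hij.symm b)⁻¹.val =
      Fintype.card n + a * b := by
  rw [mul_inv_rev, transvection_inv, transvection_inv,
    trace_transvection_mul_transvection hij.symm, neg_mul_neg, mul_comm b a]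

variable (n) in
theorem exists_trace_eq_and_trace_inv_eq [Nontrivial n] (c : R) :
    ∃ g : Matrix.SpecialLinearGroup n R, Matrix.trace g.val = c ∧ Matrix.trace g⁻¹.val = c := by
  obtain ⟨i, j, hij⟩ := exists_pair_ne n
  refine ⟨transvection hij (c - Fintype.card n) * transvection hij.symm 1, ?_, ?_⟩
  · rw [trace_transvection_mul_transvection, mul_one, add_sub_cancel]
  · rw [trace_inv_transvection_mul_transvection, mul_one, add_sub_cancel]

end SpecialLinearGroup

theorem infinite_adjoint_trace_values_SL_general
    (R n : Type*) [CommRing R] [IsDomain R] [Infinite R]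
    [Fintype n] [DecidableEq n] [Nontrivial n] :
    Set.Infinite {x : R | ∃ g : Matrix.SpecialLinearGroup n R,
      Matrix.trace g.val * Matrix.trace g⁻¹.val = x} := by
  refine (infinite_range_pow R two_pos).mono ?_
  rintro _ ⟨c, rfl⟩
  obtain ⟨g, trace_g, trace_g_inv⟩ := exists_trace_eq_and_trace_inv_eq n c
  exact ⟨g, by rw [trace_g, trace_g_inv, ← sq]⟩

/-- Over an infinite field `k` and for `r ≥ 2`, the function `g ↦ tr(g)·tr(g⁻¹)`
takes infinitely many values on `SL_r(k)`. -/
theorem infinite_adjoint_trace_values_SL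
    (k : Type*) [Field k] [Infinite k] (r : ℕ) (hr : 2 ≤ r) :
    Set.Infinite {x : k | ∃ g : Matrix.SpecialLinearGroup (Fin r) k,
      Matrix.trace ((g : Matrix (Fin r) (Fin r) k)) *
        Matrix.trace ((g⁻¹ : Matrix.SpecialLinearGroup (Fin r) k) : Matrix (Fin r) (Fin r) k)
      = x} := by
  have : Nontrivial (Fin r) := Fin.nontrivial_iff_two_le.mpr hr
  exact infinite_adjoint_trace_values_SL_general k (Fin r)
end

section
/- Let L ⊆ K be a finitely generated field extension, let K^sep be a separable closure of K, and let L^sep be the separable closure of L inside K^sep. Then the image of the restriction homomorphism Gal(K^sep/K) → Gal(L^sep/L) is an open subgroup of Gal(L^sep/L) for the Krull topology. -/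
/-!
Let `N = L^sep`. Since `K^sep/K` is Galois, the fixed field of the image of `Gal(K^sep/K)` in
`Gal(N/L)` is `N ∩ K`. The image is compact, hence closed, so by infinite Galois theory it is
open as soon as `N ∩ K` is finite over `L`.

For this finiteness, choose a transcendence basis `x` of `K/L`. It stays algebraically independent
over any algebraic subextension `E/L` of `K`, so `E` and `L(x)` are linearly disjoint over `L` and
`[E : L] ≤ [K : L(x)]`, which is finite because `K/L(x)` is algebraic and finitely generated.
-/

section LinearDisjoint

variable {ι : Type*}

theorem linearDisjoint_algebraAdjoin_of_algebraicIndependent {R S A : Type*}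
    [CommRing R] [CommRing S] [CommRing A] [Algebra R S] [Algebra R A] [Algebra S A]
    [IsScalarTower R S A] [FaithfulSMul R S] {x : ι → A} (hx : AlgebraicIndependent S x) :
    (Algebra.adjoin R (Set.range x)).LinearDisjoint (IsScalarTower.toAlgHom R S A).range := by
  have hxR : AlgebraicIndependent R x := hx.restrictScalars (FaithfulSMul.algebraMap_injective R S)
  have monomials_independent : LinearIndependent S fun m : ι →₀ ℕ =>
      MvPolynomial.aeval x (MvPolynomial.monomial m (1 : S)) := by
    simpa only [Function.comp_def, MvPolynomial.coe_basisMonomials, AlgHom.toLinearMap_apply] using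
      (MvPolynomial.basisMonomials ι S).linearIndependent.map_injOn
        (MvPolynomial.aeval x).toLinearMap (Function.Injective.injOn hx)
  let monomialBasis := (MvPolynomial.basisMonomials ι R).map hxR.aevalEquiv.toLinearEquiv
  have coe_monomialBasis : (Subalgebra.val _ ∘ monomialBasis : (ι →₀ ℕ) → A) =
      fun m => MvPolynomial.aeval x (MvPolynomial.monomial m (1 : S)) := by
    ext m
    simp [monomialBasis, MvPolynomial.aeval_monomial]
  have basis_independent : LinearIndependent S (Subalgebra.val _ ∘ monomialBasis) := by
    rwa [coe_monomialBasis]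
  exact .of_basis_left _ _ monomialBasis <| basis_independent.map_of_surjective_injective
    (IsScalarTower.toAlgHom R S A).rangeRestrict (AddMonoidHom.id A)
    (AlgHom.rangeRestrict_surjective _) (by simp) fun s a => Algebra.smul_def s a

open scoped IntermediateField.algebraAdjoinAdjoin in
theorem linearDisjoint_adjoin_of_algebraicIndependent {F E K : Type*} [Field F] [Field E] [Field K]
    [Algebra F E] [Algebra F K] [Algebra E K] [IsScalarTower F E K]
    {x : ι → K} (hx : AlgebraicIndependent E x) :
    (IntermediateField.adjoin F (Set.range x)).LinearDisjoint E := by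
  let b := Module.Basis.ofVectorSpace F E
  have hdisj := linearDisjoint_algebraAdjoin_of_algebraicIndependent (R := F) hx
  have hb : LinearIndependent (Algebra.adjoin F (Set.range x)) (algebraMap E K ∘ b) := by
    apply Subalgebra.LinearDisjoint.linearIndependent_right_of_flat hdisj <|
      b.linearIndependent.map' _
        (AlgEquiv.ofInjectiveField (IsScalarTower.toAlgHom F E K)).toLinearEquiv.ker
  exact .of_basis_right' b ((LinearIndependent.iff_fractionRing _ _).1 hb)

end LinearDisjoint

theorem finiteDimensional_of_isAlgebraic_of_essFiniteType (F E K : Type*)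
    [Field F] [Field E] [Field K] [Algebra F E] [Algebra F K] [Algebra E K] [IsScalarTower F E K]
    [Algebra.IsAlgebraic F E] [Algebra.EssFiniteType F K] : FiniteDimensional F E := by
  obtain ⟨s, hs⟩ := exists_isTranscendenceBasis F K
  let P := IntermediateField.adjoin F (Set.range ((↑) : s → K))
  have : Algebra.IsAlgebraic P K := hs.isAlgebraic_field
  have : Algebra.EssFiniteType P K := .of_comp F P K
  have : Module.Finite P K := Algebra.finite_of_essFiniteType_of_isAlgebraic
  have hdisj : P.LinearDisjoint E :=
    linearDisjoint_adjoin_of_algebraicIndependent (hs.1.extendScalars E)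
  let b := Module.Basis.ofVectorSpace F E
  have := (hdisj.linearIndependent_right' b.linearIndependent).finite
  exact .of_basis b

theorem finiteDimensional_fieldRange_inf {L K Ω : Type*} [Field L] [Field K] [Field Ω]
    [Algebra L K] [Algebra L Ω] [Algebra.EssFiniteType L K] (f : K →ₐ[L] Ω)
    (N : IntermediateField L Ω) [Algebra.IsAlgebraic L N] :
    FiniteDimensional L (f.fieldRange ⊓ N : IntermediateField L Ω) := by
  have : Algebra.EssFiniteType L f.fieldRange :=
    .of_surjective f.rangeRestrict f.rangeRestrict_surjective
  let _ : Algebra (f.fieldRange ⊓ N : IntermediateField L Ω) f.fieldRange :=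
    (IntermediateField.inclusion inf_le_left).toAlgebra
  have : Algebra.IsAlgebraic L (f.fieldRange ⊓ N : IntermediateField L Ω) :=
    .of_injective (IntermediateField.inclusion inf_le_right)
      (IntermediateField.inclusion_injective inf_le_right)
  have : IsScalarTower L (f.fieldRange ⊓ N : IntermediateField L Ω) f.fieldRange :=
    .of_algebraMap_eq fun _ => rfl
  exact finiteDimensional_of_isAlgebraic_of_essFiniteType L _ f.fieldRange

section Restriction

variable (L : Type*) {K Ω : Type*} [Field L] [Field K] [Field Ω]
  [Algebra L K] [Algebra K Ω] [Algebra L Ω] [IsScalarTower L K Ω]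

theorem continuous_restrictScalarsHom :
    Continuous (AlgEquiv.restrictScalarsHom L : Gal(Ω/K) →* Gal(Ω/L)) := by
  refine continuous_of_continuousAt_one _ fun U hU => ?_
  rw [map_one, krullTopology_mem_nhds_one_iff] at hU
  obtain ⟨M, _, hMU⟩ := hU
  obtain ⟨t, rfl⟩ : M.FG := IntermediateField.essFiniteType_iff.1 inferInstance
  have ht : ∀ y ∈ IntermediateField.adjoin L (t : Set Ω), IsIntegral L y := fun y hy =>
    IntermediateField.isIntegral_iff.1 (Algebra.IsIntegral.isIntegral (R := L)
      (⟨y, hy⟩ : IntermediateField.adjoin L (t : Set Ω)))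
  have : FiniteDimensional K (IntermediateField.adjoin K (t : Set Ω)) :=
    IntermediateField.finiteDimensional_adjoin fun y hy =>
      ht y (IntermediateField.subset_adjoin L _ hy) |>.tower_top
  refine (krullTopology_mem_nhds_one_iff K Ω _).2 ⟨_, this, fun σ hσ => hMU ?_⟩
  rw [SetLike.mem_coe, IntermediateField.mem_fixingSubgroup_iff] at hσ ⊢
  exact (IntermediateField.forall_mem_adjoin_smul_eq_self_iff L (σ.restrictScalars L)).2
    fun y hy => hσ y (IntermediateField.subset_adjoin K _ hy)

theorem fixedField_range_restrictScalarsHom [IsGalois K Ω] :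
    IntermediateField.fixedField (AlgEquiv.restrictScalarsHom L : Gal(Ω/K) →* Gal(Ω/L)).range =
      (IsScalarTower.toAlgHom L K Ω).fieldRange := by
  ext z
  simp [IntermediateField.mem_fixedField_iff,
    ← InfiniteGalois.mem_range_algebraMap_iff_fixed (k := K)]

variable (K) (N : IntermediateField L Ω)
open IntermediateField

theorem lift_fixedField_range_restrictRestrictAlgEquivMapHom [IsGalois K Ω] [Normal L N] :
    lift (fixedField (restrictRestrictAlgEquivMapHom L N K Ω).range) =
      (IsScalarTower.toAlgHom L K Ω).fieldRange ⊓ N := by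
  rw [← fixedField_range_restrictScalarsHom, InfiniteGalois.restrict_fixedField,
    ← MonoidHom.range_comp]
  rfl

theorem isClosed_range_restrictRestrictAlgEquivMapHom [IsGalois K Ω] [Normal L N] :
    IsClosed ((restrictRestrictAlgEquivMapHom L N K Ω).range : Set Gal(N/L)) := by
  have hcont : Continuous (restrictRestrictAlgEquivMapHom L N K Ω) :=
    (InfiniteGalois.restrictNormalHom_continuous N).comp (continuous_restrictScalarsHom L)
  rw [MonoidHom.coe_range]
  exact (isCompact_range hcont).isClosed

theorem isOpen_range_restrictRestrictAlgEquivMapHom_iff [IsGalois K Ω] [IsGalois L N] :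
    IsOpen ((restrictRestrictAlgEquivMapHom L N K Ω).range : Set Gal(N/L)) ↔
      FiniteDimensional L
        ((IsScalarTower.toAlgHom L K Ω).fieldRange ⊓ N : IntermediateField L Ω) := by
  let H : ClosedSubgroup Gal(N/L) := ⟨_, isClosed_range_restrictRestrictAlgEquivMapHom L K N⟩
  rw [← lift_fixedField_range_restrictRestrictAlgEquivMapHom]
  calc
    IsOpen (H.1 : Set Gal(N/L)) ↔ IsOpen (fixedField H.1).fixingSubgroup.carrier := by
      rw [InfiniteGalois.fixingSubgroup_fixedField H]
      rfl
    _ ↔ FiniteDimensional L (fixedField H.1) := InfiniteGalois.isOpen_iff_finite _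
    _ ↔ FiniteDimensional L (lift (fixedField H.1)) :=
      Module.Finite.equiv_iff (liftAlgEquiv _).toLinearEquiv

end Restriction

theorem restriction_image_isOpen_of_fg_general
    (L K Ω : Type*) [Field L] [Field K] [Field Ω]
    [Algebra L K] [Algebra K Ω] [Algebra L Ω] [IsScalarTower L K Ω]
    [Algebra.EssFiniteType L K] [IsGalois K Ω]
    (N : IntermediateField L Ω) [IsGalois L N] :
    IsOpen (Set.range fun σ : Ω ≃ₐ[K] Ω =>
      AlgEquiv.restrictNormalHom (F := L) (K₁ := Ω) N (σ.restrictScalars L)) :=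
  (isOpen_range_restrictRestrictAlgEquivMapHom_iff L K N).2
    (finiteDimensional_fieldRange_inf _ N)

/-- Let `L ⊆ K` be a finitely generated field extension, `Ω = K^sep` a separable closure
of `K`, and `L^sep = separableClosure L Ω` the separable closure of `L` inside `Ω`.
Then the image of the restriction homomorphism `Gal(K^sep/K) → Gal(L^sep/L)` is an open
subgroup of `Gal(L^sep/L)` for the Krull topology. -/
theorem restriction_image_isOpen_of_fg
    (L K Ω : Type*) [Field L] [Field K] [Field Ω]
    [Algebra L K] [Algebra K Ω] [Algebra L Ω] [IsScalarTower L K Ω]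
    [IsSepClosed Ω] [IsSepClosure K Ω]
    (hfg : ∃ s : Finset K, IntermediateField.adjoin L (s : Set K) = ⊤) :
    IsOpen (Set.range fun σ : Ω ≃ₐ[K] Ω =>
      AlgEquiv.restrictNormalHom (F := L) (K₁ := Ω) (separableClosure L Ω)
        (σ.restrictScalars L)) := by
  have : Algebra.EssFiniteType L K := IntermediateField.fg_top_iff.1 hfg
  exact restriction_image_isOpen_of_fg_general L K Ω (separableClosure L Ω)
end

section
/- Let K be a field equipped with a nontrivial nonarchimedean absolute value, and give K^(r²) and GL_r(K) ⊆ K^(r²) the resulting topology. If a polynomial f ∈ K[X₁₁,…,X_rr] in the r² matrix entries vanishes at every element of an open subgroup U of GL_r(K), then f is the zero polynomial; in particular, an open subgroup of GL_r(K) is Zariski dense in GL_r, i.e. every polynomial over K vanishing on U vanishes on GL_r(K̄) for any algebraic closure K̄ of K. -/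
open scoped MatrixGroups

/-!
Around any matrix, each entry can be varied independently within an infinite set without leaving a
given neighbourhood, because a nontrivial absolute value takes arbitrarily small nonzero values.
The product of `f` with the generic determinant vanishes on such a box of matrices: on the
invertible ones by the hypothesis on `f`, on the singular ones because of the determinant. A
polynomial over a domain which vanishes on a box with infinite sides is zero, and the generic
determinant is not zero, so `f` is.
-/

theorem infinite_setOf_abv_sub_lt {R S : Type*} [Ring R] [Semifield S] [LinearOrder S]
    [IsStrictOrderedRing S] [Archimedean S] [ExistsAddOfLE S] {v : AbsoluteValue R S} {p : R}
    (hp₀ : p ≠ 0) (hp₁ : v p < 1) (c : R) {ε : S} (hε : 0 < ε) :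
    {x | v (x - c) < ε}.Infinite := by
  have : Nontrivial R := nontrivial_of_ne p 0 hp₀
  obtain ⟨N, hN⟩ := exists_pow_lt_of_lt_one hε hp₁
  have v_pow_strictAnti : StrictAnti fun k : ℕ => v p ^ k := pow_right_strictAnti₀ (v.pos hp₀) hp₁
  have pow_injective : Function.Injective fun k : ℕ => p ^ k := fun a b hab =>
    v_pow_strictAnti.injective <| by simpa only [map_pow] using congrArg v hab
  refine Set.infinite_of_injective_forall_mem (f := fun k : ℕ => p ^ (N + k) + c)
    ((add_left_injective c).comp (pow_injective.comp (add_right_injective N))) fun k => ?_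
  calc v (p ^ (N + k) + c - c) = v p ^ (N + k) := by rw [add_sub_cancel_right, map_pow]
    _ ≤ v p ^ N := v_pow_strictAnti.antitone (Nat.le_add_right N k)
    _ < ε := hN

theorem mvPolynomial_eq_zero_of_eval_eq_zero_of_eval_ne_zero {σ R : Type*} [CommRing R] [IsDomain R]
    {f d : MvPolynomial σ R} (hd : d ≠ 0) {s : σ → Set R} (hs : ∀ i, (s i).Infinite)
    (hf : ∀ x ∈ Set.univ.pi s, MvPolynomial.eval x d ≠ 0 → MvPolynomial.eval x f = 0) :
    f = 0 := by
  have mul_d_eq_zero : f * d = 0 := MvPolynomial.funext_set s hs fun x hx => by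
    rw [map_mul, map_zero, mul_eq_zero, or_iff_not_imp_right]
    exact hf x hx
  exact eq_zero_of_ne_zero_of_mul_right_eq_zero hd mul_d_eq_zero

theorem mvPolynomial_eq_zero_of_eval_generalLinearGroup_eq_zero {n K : Type*} [Fintype n]
    [DecidableEq n] [Field K] {f : MvPolynomial (n × n) K} {s : n → n → Set K}
    (hs : ∀ i j, (s i j).Infinite)
    (hf : ∀ g : GL n K, (∀ i j, g i j ∈ s i j) → MvPolynomial.eval (fun ij => g ij.1 ij.2) f = 0) :
    f = 0 := by
  refine mvPolynomial_eq_zero_of_eval_eq_zero_of_eval_ne_zero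
    (Matrix.det_mvPolynomialX_ne_zero n K) (s := fun ij => s ij.1 ij.2) (fun ij => hs ij.1 ij.2)
    fun x hx hdet => ?_
  rw [Matrix.eval_det_mvPolynomialX] at hdet
  exact hf (Matrix.GeneralLinearGroup.mkOfDetNeZero _ hdet) fun i j => hx (i, j) (Set.mem_univ _)

theorem polynomial_zero_of_vanishing_on_open_subgroup_general {n K S : Type*} [Fintype n]
    [DecidableEq n] [Field K] [Semifield S] [LinearOrder S] [IsStrictOrderedRing S] [Archimedean S]
    [ExistsAddOfLE S] {v : AbsoluteValue K S} (hv : v.IsNontrivial) (g : GL n K) {ε : S}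
    (hε : 0 < ε) {f : MvPolynomial (n × n) K}
    (hf : ∀ h : GL n K, (∀ i j, v (h i j - g i j) < ε) →
      MvPolynomial.eval (fun ij => h ij.1 ij.2) f = 0) :
    f = 0 := by
  obtain ⟨p, hp₀, hp₁⟩ := hv.exists_abv_lt_one
  exact mvPolynomial_eq_zero_of_eval_generalLinearGroup_eq_zero
    (fun i j => infinite_setOf_abv_sub_lt hp₀ hp₁ (g i j) hε) hf

/-- Let `K` be a field with a nontrivial nonarchimedean absolute value, and let `U` be a
subgroup of `GL_r(K)` which is open for the topology induced by the absolute value on the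
`r²` matrix entries.  If a polynomial `f` in the matrix entries vanishes at every element
of `U`, then `f = 0`; in particular `f` (base-changed) vanishes at every element of
`GL_r(K̄)` for any algebraic closure `K̄` of `K`. -/
theorem polynomial_zero_of_vanishing_on_open_subgroup
    (K Kbar : Type*) [Field K] [Field Kbar] [Algebra K Kbar] [IsAlgClosure K Kbar]
    (v : AbsoluteValue K ℝ)
    (hna : ∀ x y : K, v (x + y) ≤ max (v x) (v y))
    (hnt : ∃ x : K, x ≠ 0 ∧ v x ≠ 1)
    (r : ℕ)
    (U : Subgroup (GL (Fin r) K))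
    (hopen : ∀ g ∈ U, ∃ ε > (0 : ℝ), ∀ h : GL (Fin r) K,
      (∀ i j, v ((h : Matrix (Fin r) (Fin r) K) i j - (g : Matrix (Fin r) (Fin r) K) i j) < ε)
        → h ∈ U)
    (f : MvPolynomial (Fin r × Fin r) K)
    (hf : ∀ g ∈ U, MvPolynomial.eval
      (fun ij => (g : Matrix (Fin r) (Fin r) K) ij.1 ij.2) f = 0) :
    f = 0 ∧ ∀ g : GL (Fin r) Kbar,
      MvPolynomial.eval (fun ij => (g : Matrix (Fin r) (Fin r) Kbar) ij.1 ij.2)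
        (MvPolynomial.map (algebraMap K Kbar) f) = 0 := by
  obtain ⟨ε, hε, hU⟩ := hopen 1 U.one_mem
  obtain rfl : f = 0 := polynomial_zero_of_vanishing_on_open_subgroup_general hnt 1 hε
    fun h hh => hf h (hU h hh)
  simp
end
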